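/- Let S ⊆ [n]² be admissible, Ā ∈ M_S with ‖Ā‖_max ≤ 1, σ > 0, and let A ~ N_S(Ā, σ²Id). Fix k, l ∈ [n]. Then for every real t > 2|S|, Prob{ c†_{kl}(A) > t } ≤ ((1 + σ)/σ)·(4|S|²/(t − 2|S|))·√(2/π), where c†_{kl}(A) is the componentwise condition number of the map A ↦ (A⁻¹)_{kl} at A (A is almost surely invertible). -/

import Mathlib

open MeasureTheory ProbabilityTheory
open scoped ENNReal

/-- Componentwise "distance" `d(u,v) = ‖(u−v)/v‖_∞`, valued in `[0,∞]`:
the `i`-th component of the quotient is `|u i − v i|/|v i|` if `v i ≠ 0`,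
`0` if `u i = v i = 0`, and `∞` otherwise. -/
noncomputable def cwDist {ι : Type*} (u v : ι → ℝ) : ℝ≥0∞ :=
  ⨆ i, if v i ≠ 0 then ENNReal.ofReal (|u i - v i| / |v i|)
       else if u i = v i then 0 else ⊤

/-- Componentwise condition number of `F : D ⊆ ℝ^ι → ℝ^κ` at `a`:
`c^F(a) = lim_{δ→0} sup { d(F x, F a)/d(x,a) : x ∈ D, d(x,a) ≤ δ, x ≠ a }`,
the limit being an infimum since the sup is monotone in `δ`. -/
noncomputable def cwCond {ι κ : Type*} (D : Set (ι → ℝ)) (F : (ι → ℝ) → κ → ℝ)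
    (a : ι → ℝ) : ℝ≥0∞ :=
  ⨅ δ ∈ Set.Ioi (0 : ℝ≥0∞),
    ⨆ x ∈ {x ∈ D | cwDist x a ≤ δ ∧ x ≠ a}, cwDist (F x) (F a) / cwDist x a

/-- A matrix viewed as a point of `ℝ^(n×n)`. -/
def matToFun {n : ℕ} (A : Matrix (Fin n) (Fin n) ℝ) : Fin n × Fin n → ℝ :=
  fun p => A p.1 p.2

/-- A point of `ℝ^(n×n)` viewed as a matrix. -/
def funToMat {n : ℕ} (x : Fin n × Fin n → ℝ) : Matrix (Fin n) (Fin n) ℝ :=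
  Matrix.of fun i j => x (i, j)

/-- The componentwise condition number `c^det(A)` of determinant computation at `A`. -/
noncomputable def cDet {n : ℕ} (A : Matrix (Fin n) (Fin n) ℝ) : ℝ≥0∞ :=
  cwCond Set.univ (fun x (_ : Unit) => (funToMat x).det) (matToFun A)

/-- The componentwise condition number `c†_{kl}(A)` of the map `A ↦ (A⁻¹)_{kl}` at `A`. -/
noncomputable def cInv {n : ℕ} (k l : Fin n) (A : Matrix (Fin n) (Fin n) ℝ) : ℝ≥0∞ :=
  cwCond {x | IsUnit (funToMat x).det}
    (fun x (_ : Unit) => (funToMat x)⁻¹ k l) (matToFun A)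

/-- `c†(A) = max_{k,l} c†_{kl}(A)`. -/
noncomputable def cInvMax {n : ℕ} (A : Matrix (Fin n) (Fin n) ℝ) : ℝ≥0∞ :=
  ⨆ k, ⨆ l, cInv k l A

/-- A pair (matrix, right-hand side) viewed as a point of `ℝ^(n×n+n)`. -/
def pairToFun {n : ℕ} (A : Matrix (Fin n) (Fin n) ℝ) (b : Fin n → ℝ) :
    (Fin n × Fin n) ⊕ Fin n → ℝ :=
  Sum.elim (fun p => A p.1 p.2) b

def funToMat' {n : ℕ} (x : (Fin n × Fin n) ⊕ Fin n → ℝ) : Matrix (Fin n) (Fin n) ℝ :=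
  Matrix.of fun i j => x (Sum.inl (i, j))

def funToVec {n : ℕ} (x : (Fin n × Fin n) ⊕ Fin n → ℝ) : Fin n → ℝ :=
  fun i => x (Sum.inr i)

/-- The componentwise condition number `c_k(A,b)` of the map `(A,b) ↦ (A⁻¹b)_k` at `(A,b)`. -/
noncomputable def cLin {n : ℕ} (k : Fin n) (A : Matrix (Fin n) (Fin n) ℝ)
    (b : Fin n → ℝ) : ℝ≥0∞ :=
  cwCond {x | IsUnit (funToMat' x).det}
    (fun x (_ : Unit) => (Matrix.mulVec (funToMat' x)⁻¹ (funToVec x)) k) (pairToFun A b)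

/-- `c(A,b) = max_k c_k(A,b)`. -/
noncomputable def cLinMax {n : ℕ} (A : Matrix (Fin n) (Fin n) ℝ) (b : Fin n → ℝ) : ℝ≥0∞ :=
  ⨆ k, cLin k A b

instance matrixMeasurableSpace {n : ℕ} : MeasurableSpace (Matrix (Fin n) (Fin n) ℝ) :=
  inferInstanceAs (MeasurableSpace (Fin n → Fin n → ℝ))

/-- The distribution `N_S(Ā, σ²Id)` of a random sparse matrix: the entries `a_{ij}` with
`(i,j) ∈ S` are independent Gaussians `N(ā_{ij}, σ²)`, and `a_{ij} = 0` for `(i,j) ∉ S`. -/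
noncomputable def sparseGaussian {n : ℕ} (S : Finset (Fin n × Fin n))
    (Abar : Matrix (Fin n) (Fin n) ℝ) (σ : ℝ) : Measure (Matrix (Fin n) (Fin n) ℝ) :=
  (Measure.pi fun p : S => gaussianReal (Abar p.1.1 p.1.2) ⟨σ ^ 2, sq_nonneg σ⟩).map
    fun g => Matrix.of fun i j => if h : (i, j) ∈ S then g ⟨(i, j), h⟩ else 0

/-- The distribution `N(b̄, σ²Id)` on `ℝⁿ`: independent Gaussian entries `N(b̄_i, σ²)`. -/
noncomputable def vecGaussian {n : ℕ} (bbar : Fin n → ℝ) (σ : ℝ) : Measure (Fin n → ℝ) :=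
  Measure.pi fun i => gaussianReal (bbar i) ⟨σ ^ 2, sq_nonneg σ⟩

/-- `S ⊆ [n]²` is admissible when `M_S` contains an invertible matrix. -/
def Admissible {n : ℕ} (S : Finset (Fin n × Fin n)) : Prop :=
  ∃ B : Matrix (Fin n) (Fin n) ℝ, (∀ i j, (i, j) ∉ S → B i j = 0) ∧ IsUnit B.det

/-!
By Cramer's rule `(A⁻¹)_{kl}` is a quotient `P / Q` of an adjugate entry and the determinant, both
affine in each single entry of `A`. Entries outside `S` are not perturbed at finite componentwise
distance, so the condition number of `P / Q` is at most the sum of the relative sensitivities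
`∑ᵢ |xᵢ ∂ᵢP / P| + ∑ᵢ |xᵢ ∂ᵢQ / Q|` over the `|S|` free entries. If all entries but `z = xᵢ` are
fixed, a summand has the form `|zβ / (α + zβ)|`, and this exceeds `s > 1` only when `-zβ/α` lies in
the interval `[s/(s+1), s/(s-1)]`, whose length relative to its left end is `2/(s-1)`. A Gaussian
with mean bounded by `M` has density at most `K / |z|` with `K = (M + σ) / (σ√(2π))`, so this
happens with probability at most `2K/(s-1)`, uniformly in `α` and `β`. If `c†_{kl}(A) > t`, one of
the two sums exceeds `t/2`, hence one of its summands exceeds `s = t/(2|S|)`, and a union bound over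
the `2|S|` summands concludes.
-/

section ConditionNumber

open Function Filter Topology

variable {ι κ : Type*}

theorem cwDist_self (u : ι → ℝ) : cwDist u u = 0 := by
  simp [cwDist]

theorem cwDist_const_le (u : ℝ) {v : ℝ} (hv : v ≠ 0) :
    cwDist (fun _ : ι => u) (fun _ => v) ≤ ENNReal.ofReal (|u - v| / |v|) := by
  simp [cwDist, hv]

theorem abs_sub_le_toReal_cwDist_mul_abs {u v : ι → ℝ} (h : cwDist u v ≠ ⊤) (i : ι) :
    |u i - v i| ≤ (cwDist u v).toReal * |v i| := by
  have hi : (if v i ≠ 0 then ENNReal.ofReal (|u i - v i| / |v i|)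
      else if u i = v i then 0 else ⊤) ≤ cwDist u v :=
    le_iSup (fun j => if v j ≠ 0 then ENNReal.ofReal (|u j - v j| / |v j|)
      else if u j = v j then 0 else ⊤) i
  split_ifs at hi with hv huv
  · rw [← div_le_iff₀ (abs_pos.mpr hv)]
    exact (ENNReal.ofReal_le_iff_le_toReal h).mp hi
  · simp_all
  · exact absurd (top_le_iff.mp hi) h

theorem norm_sub_le_toReal_cwDist_mul_norm [Fintype ι] {u v : ι → ℝ} (h : cwDist u v ≠ ⊤) :
    ‖u - v‖ ≤ (cwDist u v).toReal * ‖v‖ := by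
  refine (pi_norm_le_iff_of_nonneg (by positivity)).mpr fun i => ?_
  calc ‖(u - v) i‖ ≤ (cwDist u v).toReal * |v i| := abs_sub_le_toReal_cwDist_mul_abs h i
    _ ≤ (cwDist u v).toReal * ‖v‖ := by gcongr; exact norm_le_pi_norm v i

theorem cwCond_const (D : Set (ι → ℝ)) (c : κ → ℝ) (a : ι → ℝ) :
    cwCond D (fun _ => c) a = 0 := by
  simp only [cwCond, cwDist_self, ENNReal.zero_div, ENNReal.iSup_zero]
  exact le_antisymm (iInf₂_le 1 (by simp)) zero_le

theorem cwCond_le_of_eventually_cwDist_le [Finite ι] {D : Set (ι → ℝ)} {F : (ι → ℝ) → κ → ℝ}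
    {a : ι → ℝ} {C : ℝ≥0∞}
    (h : ∀ᶠ x in 𝓝 a, cwDist x a ≠ ⊤ → cwDist (F x) (F a) ≤ C * cwDist x a) :
    cwCond D F a ≤ C := by
  have := Fintype.ofFinite ι
  obtain ⟨r, hr, hball⟩ := Metric.eventually_nhds_iff.mp h
  refine iInf₂_le_of_le (ENNReal.ofReal (r / 2 / (‖a‖ + 1)))
    (ENNReal.ofReal_pos.mpr (by positivity)) (iSup₂_le ?_)
  rintro x ⟨-, hxδ, -⟩
  have hfin : cwDist x a ≠ ⊤ := ne_top_of_le_ne_top ENNReal.ofReal_ne_top hxδ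
  refine ENNReal.div_le_of_le_mul (hball ?_ hfin)
  calc dist x a = ‖x - a‖ := dist_eq_norm x a
    _ ≤ (cwDist x a).toReal * ‖a‖ := norm_sub_le_toReal_cwDist_mul_norm hfin
    _ ≤ r / 2 / (‖a‖ + 1) * (‖a‖ + 1) := by
        gcongr
        · exact ENNReal.toReal_le_of_le_ofReal (by positivity) hxδ
        · linarith
    _ < r := by field_simp; linarith

theorem cwDist_extend_zero {e : κ → ι} (he : Injective e) (u v : κ → ℝ) :
    cwDist (extend e u 0) (extend e v 0) = cwDist u v := by
  refine le_antisymm (iSup_le fun i => ?_) (iSup_le fun j => ?_)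
  · by_cases hi : ∃ j, e j = i
    · obtain ⟨j, rfl⟩ := hi
      simp only [he.extend_apply]
      exact le_iSup (fun j => if v j ≠ 0 then ENNReal.ofReal (|u j - v j| / |v j|)
        else if u j = v j then 0 else ⊤) j
    · simp [extend_apply' _ _ _ hi]
  · refine le_iSup_of_le (e j) ?_
    simp only [he.extend_apply]
    exact le_rfl

theorem eq_extend_zero_of_cwDist_ne_top {e : κ → ι} (he : Injective e) {x : ι → ℝ} {a : κ → ℝ}
    (h : cwDist x (extend e a 0) ≠ ⊤) : x = extend e (x ∘ e) 0 := by
  ext i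
  by_cases hi : ∃ j, e j = i
  · obtain ⟨j, rfl⟩ := hi
    simp [he.extend_apply]
  · simpa [extend_apply' _ _ _ hi] using abs_sub_le_toReal_cwDist_mul_abs h i

-- A point at finite componentwise distance from `a` vanishes wherever `a` does, so perturbations
-- outside the range of `e` are never seen.
theorem cwCond_extend_zero_le {κ' : Type*} {e : κ → ι} (he : Injective e) (D : Set (ι → ℝ))
    (F : (ι → ℝ) → κ' → ℝ) (a : κ → ℝ) :
    cwCond D F (extend e a 0) ≤
      cwCond {y | extend e y 0 ∈ D} (fun y => F (extend e y 0)) a := by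
  refine le_iInf₂ fun δ hδ => iInf₂_le_of_le (min δ 1) (by simpa using hδ) (iSup₂_le ?_)
  rintro x ⟨hxD, hxδ, hxa⟩
  obtain ⟨hxδ, hx1⟩ := le_min_iff.mp hxδ
  have hx := eq_extend_zero_of_cwDist_ne_top he (ne_top_of_le_ne_top ENNReal.one_ne_top hx1)
  generalize x ∘ e = y at hx
  subst hx
  rw [cwDist_extend_zero he] at hxδ ⊢
  exact le_iSup₂_of_le (f := fun y _ => cwDist (F (extend e y 0)) (F (extend e a 0)) / cwDist y a)
    y ⟨hxD, hxδ, fun hya => hxa (hya ▸ rfl)⟩ le_rfl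

theorem hasDerivAt_comp_update [Finite ι] [DecidableEq ι] {F : (ι → ℝ) → ℝ} {a : ι → ℝ}
    (hF : DifferentiableAt ℝ F a) (i : ι) :
    HasDerivAt (fun y => F (update a i y)) (fderiv ℝ F a (Pi.single i 1)) (a i) := by
  have := Fintype.ofFinite ι
  have hF' : HasFDerivAt F (fderiv ℝ F a) (update a i (a i)) := by
    simpa using hF.hasFDerivAt
  exact hF'.comp_hasDerivAt (a i) (hasDerivAt_update a i (a i))

/-- The relative sensitivity `∑ i, |a i * ∂ᵢ log |F|(a)|` of a real function `F` at `a`, which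
bounds its componentwise condition number there. The logarithmic partial derivative is Mathlib's
`logDeriv` of the restriction of `F` to the `i`-th coordinate line, hence `0` where `F` vanishes. -/
noncomputable def relSensitivity [Fintype ι] [DecidableEq ι] (F : (ι → ℝ) → ℝ) (a : ι → ℝ) : ℝ :=
  ∑ i, |a i * logDeriv (fun y => F (update a i y)) (a i)|

section RelSensitivity

variable [Fintype ι] [DecidableEq ι] {F P Q : (ι → ℝ) → ℝ} {a : ι → ℝ}

theorem relSensitivity_nonneg : 0 ≤ relSensitivity F a :=
  Finset.sum_nonneg fun _ _ => abs_nonneg _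

theorem relSensitivity_mul_abs (hF : DifferentiableAt ℝ F a) (h0 : F a ≠ 0) :
    relSensitivity F a * |F a| = ∑ i, |a i| * |fderiv ℝ F a (Pi.single i 1)| := by
  rw [relSensitivity, Finset.sum_mul]
  refine Finset.sum_congr rfl fun i _ => ?_
  rw [← abs_mul, ← abs_mul, logDeriv_apply, (hasDerivAt_comp_update hF i).deriv, update_eq_self]
  field_simp

theorem abs_fderiv_sub_le (hF : DifferentiableAt ℝ F a) (h0 : F a ≠ 0) {x : ι → ℝ}
    (hx : cwDist x a ≠ ⊤) :
    |fderiv ℝ F a (x - a)| ≤ (cwDist x a).toReal * (relSensitivity F a * |F a|) := by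
  have hsum : fderiv ℝ F a (x - a) = ∑ i, (x i - a i) * fderiv ℝ F a (Pi.single i 1) := by
    conv_lhs => rw [pi_eq_sum_univ' (x - a)]
    simp
  rw [hsum, relSensitivity_mul_abs hF h0, Finset.mul_sum]
  refine (Finset.abs_sum_le_sum_abs _ _).trans (Finset.sum_le_sum fun i _ => ?_)
  rw [abs_mul, ← mul_assoc]
  gcongr
  exact abs_sub_le_toReal_cwDist_mul_abs hx i

theorem eventually_abs_sub_le (hF : DifferentiableAt ℝ F a) (h0 : F a ≠ 0) {ε : ℝ} (hε : 0 < ε) :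
    ∀ᶠ x in 𝓝 a, cwDist x a ≠ ⊤ →
      |F x - F a| ≤ (relSensitivity F a + ε) * |F a| * (cwDist x a).toReal := by
  have hη : 0 < ε * |F a| / (‖a‖ + 1) := by positivity
  filter_upwards [hF.hasFDerivAt.isLittleO.def hη] with x hx hfin
  have hnorm : ε * |F a| / (‖a‖ + 1) * ‖x - a‖ ≤ ε * |F a| * (cwDist x a).toReal :=
    calc _ ≤ ε * |F a| / (‖a‖ + 1) * ((cwDist x a).toReal * (‖a‖ + 1)) := by
          gcongr
          refine (norm_sub_le_toReal_cwDist_mul_norm hfin).trans ?_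
          gcongr
          linarith
      _ = _ := by field_simp
  calc |F x - F a| ≤ |F x - F a - fderiv ℝ F a (x - a)| + |fderiv ℝ F a (x - a)| := by
        simpa using abs_add_le (F x - F a - fderiv ℝ F a (x - a)) (fderiv ℝ F a (x - a))
    _ ≤ ε * |F a| * (cwDist x a).toReal
        + (cwDist x a).toReal * (relSensitivity F a * |F a|) :=
        add_le_add (hx.trans hnorm) (abs_fderiv_sub_le hF h0 hfin)
    _ = (relSensitivity F a + ε) * |F a| * (cwDist x a).toReal := by ring

theorem cwCond_le_relSensitivity (D : Set (ι → ℝ)) (hF : DifferentiableAt ℝ F a)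
    (h0 : F a ≠ 0) :
    cwCond D (fun x (_ : κ) => F x) a ≤ ENNReal.ofReal (relSensitivity F a) := by
  refine ENNReal.le_of_forall_pos_le_add fun ε hε _ => ?_
  rw [← ENNReal.ofReal_coe_nnreal, ← ENNReal.ofReal_add relSensitivity_nonneg ε.coe_nonneg]
  refine cwCond_le_of_eventually_cwDist_le ?_
  filter_upwards [eventually_abs_sub_le hF h0 (NNReal.coe_pos.mpr hε)] with x hx hfin
  have hs := relSensitivity_nonneg (F := F) (a := a)
  refine (cwDist_const_le _ h0).trans ?_
  rw [← ENNReal.ofReal_toReal hfin, ← ENNReal.ofReal_mul (by positivity)]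
  refine ENNReal.ofReal_le_ofReal ((div_le_iff₀ (abs_pos.mpr h0)).mpr ?_)
  rw [mul_right_comm]
  exact hx hfin

theorem relSensitivity_div_le (hP : DifferentiableAt ℝ P a) (hQ : DifferentiableAt ℝ Q a)
    (hP0 : P a ≠ 0) (hQ0 : Q a ≠ 0) :
    relSensitivity (fun x => P x / Q x) a ≤ relSensitivity P a + relSensitivity Q a := by
  rw [relSensitivity, relSensitivity, relSensitivity, ← Finset.sum_add_distrib]
  refine Finset.sum_le_sum fun i _ => ?_
  rw [logDeriv_div _ (by simpa using hP0) (by simpa using hQ0)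
    (hasDerivAt_comp_update hP i).differentiableAt (hasDerivAt_comp_update hQ i).differentiableAt,
    mul_sub]
  exact abs_sub _ _

theorem cwCond_div_le (D : Set (ι → ℝ)) (hP : DifferentiableAt ℝ P a)
    (hQ : DifferentiableAt ℝ Q a) (hP0 : P a ≠ 0) (hQ0 : Q a ≠ 0) :
    cwCond D (fun x (_ : κ) => P x / Q x) a ≤
      ENNReal.ofReal (relSensitivity P a + relSensitivity Q a) :=
  (cwCond_le_relSensitivity D (hP.mul (hQ.inv hQ0)) (div_ne_zero hP0 hQ0)).trans
    (ENNReal.ofReal_le_ofReal (relSensitivity_div_le hP hQ hP0 hQ0))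

end RelSensitivity

end ConditionNumber

section CoordAffine

open Function

variable {ι : Type*} [DecidableEq ι]

/-- A function on `ℝ^ι` that is affine in each coordinate when the other coordinates are fixed,
such as the determinant in terms of the entries of a matrix. -/
def IsCoordAffine (f : (ι → ℝ) → ℝ) : Prop :=
  ∀ x i, ∃ α β : ℝ, ∀ y, f (update x i y) = α + y * β

namespace IsCoordAffine

variable {f : (ι → ℝ) → ℝ}

theorem apply_update (hf : IsCoordAffine f) (x : ι → ℝ) (i : ι) (y : ℝ) :
    f (update x i y) = f (update x i 0) + y * (f (update x i 1) - f (update x i 0)) := by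
  obtain ⟨α, β, h⟩ := hf x i
  simp only [h]
  ring

theorem subsingleton_setOf_apply_update_eq_zero (hf : IsCoordAffine f) {x : ι → ℝ}
    (hx : f x ≠ 0) (i : ι) : {z | f (update x i z) = 0}.Subsingleton := by
  obtain ⟨α, β, h⟩ := hf x i
  intro z hz w hw
  simp only [Set.mem_ofPred_eq, h] at hz hw
  have hβ : β ≠ 0 := by
    rintro rfl
    have hxi := h (x i)
    rw [update_eq_self] at hxi
    exact hx (by linarith)
  exact mul_right_cancel₀ hβ (by linarith)

theorem logDeriv_apply_update (hf : IsCoordAffine f) (x : ι → ℝ) (i : ι) :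
    logDeriv (fun y => f (update x i y)) (x i) =
      (f (update x i 1) - f (update x i 0)) / f x := by
  have hderiv : HasDerivAt (fun y => f (update x i y)) (f (update x i 1) - f (update x i 0))
      (x i) := by
    rw [funext (hf.apply_update x i)]
    simpa using ((hasDerivAt_id (x i)).mul_const _).const_add (f (update x i 0))
  rw [logDeriv_apply, hderiv.deriv, update_eq_self]

theorem differentiable_piecewise [Finite ι] (hf : IsCoordAffine f) (T : Finset ι)
    (x₀ : ι → ℝ) : Differentiable ℝ fun x => f (T.piecewise x x₀) := by
  have := Fintype.ofFinite ι
  induction T using Finset.induction_on generalizing x₀ with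
  | empty => simp
  | insert i T hi ih =>
    have hrec (x : ι → ℝ) : f ((insert i T).piecewise x x₀) =
        f (T.piecewise x (update x₀ i 0)) +
          x i * (f (T.piecewise x (update x₀ i 1)) - f (T.piecewise x (update x₀ i 0))) := by
      rw [Finset.piecewise_insert, hf.apply_update]
      simp only [Finset.update_piecewise_of_notMem _ _ _ hi]
    simp only [hrec]
    exact (ih _).add ((differentiable_apply i).mul ((ih _).sub (ih _)))

theorem differentiable [Finite ι] (hf : IsCoordAffine f) : Differentiable ℝ f := by
  have := Fintype.ofFinite ι
  simpa using hf.differentiable_piecewise Finset.univ 0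

theorem measurable [Finite ι] (hf : IsCoordAffine f) : Measurable f := by
  have := Fintype.ofFinite ι
  exact hf.differentiable.continuous.measurable

end IsCoordAffine

end CoordAffine

section LogDensity

/-- A measure on `ℝ` whose density at `z` is at most `K / |z|`. For the law of a random variable
`Z` this says that `log |Z|` has density at most `K` on each of the events `Z > 0` and `Z < 0`. -/
def LogDensityLE (μ : Measure ℝ) (K : ℝ≥0∞) : Prop :=
  μ ≤ volume.withDensity fun z => K / ‖z‖ₑ

theorem mem_Icc_of_lt_abs_div {s w : ℝ} (hs : 1 < s) (h : s < |w / (1 - w)|) :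
    w ∈ Set.Icc (s / (s + 1)) (s / (s - 1)) := by
  have hw : w ≠ 1 := by
    rintro rfl
    norm_num at h
    linarith
  rw [abs_div, lt_div_iff₀ (abs_pos.mpr (sub_ne_zero.mpr hw.symm))] at h
  rw [Set.mem_Icc, div_le_iff₀ (by linarith), le_div_iff₀ (by linarith)]
  constructor <;>
  cases abs_cases w <;> cases abs_cases (1 - w) <;> nlinarith

namespace LogDensityLE

variable {μ : Measure ℝ} {K : ℝ≥0∞}

theorem nullSingletonClass (hμ : LogDensityLE μ K) : NullSingletonClass μ :=
  ⟨fun z => le_antisymm ((hμ {z}).trans (by simp)) zero_le⟩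

theorem measure_preimage_mul_Icc_le (hμ : LogDensityLE μ K) {a b r : ℝ} (ha : 0 < a) (hr : r ≠ 0) :
    μ ((r * ·) ⁻¹' Set.Icc a b) ≤ K * ENNReal.ofReal (b / a - 1) := by
  have hmeas : MeasurableSet ((r * ·) ⁻¹' Set.Icc a b) :=
    measurableSet_Icc.preimage (measurable_const_mul r)
  calc μ ((r * ·) ⁻¹' Set.Icc a b)
      ≤ ∫⁻ z in (r * ·) ⁻¹' Set.Icc a b, K / ‖z‖ₑ :=
        (hμ _).trans_eq (withDensity_apply _ hmeas)
    _ ≤ ∫⁻ _ in (r * ·) ⁻¹' Set.Icc a b, K * ENNReal.ofReal (|r| / a) := by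
        refine setLIntegral_mono' hmeas fun z hz => ?_
        have hz0 : z ≠ 0 := by
          rintro rfl
          simp only [Set.mem_preimage, mul_zero] at hz
          exact ha.not_ge hz.1
        rw [div_eq_mul_inv, ← enorm_inv hz0, Real.enorm_eq_ofReal_abs]
        gcongr
        rw [abs_inv, inv_le_iff_one_le_mul₀ (abs_pos.mpr hz0), div_mul_eq_mul_div, one_le_div ha,
          ← abs_mul]
        exact hz.1.trans (le_abs_self _)
    _ = K * ENNReal.ofReal (b / a - 1) := by
        rw [setLIntegral_const, Real.volume_preimage_mul_left hr, Real.volume_Icc, mul_assoc,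
          ← ENNReal.ofReal_mul (by positivity), ← ENNReal.ofReal_mul (by positivity), abs_inv]
        congr 2
        field_simp

theorem measure_lt_abs_div_le (hμ : LogDensityLE μ K) {s : ℝ} (hs : 1 < s) (α β : ℝ) :
    μ {z | s < |z * (β / (α + z * β))|} ≤ K * ENNReal.ofReal (2 / (s - 1)) := by
  rcases eq_or_ne α 0 with rfl | hα
  · have hempty : {z : ℝ | s < |z * (β / (0 + z * β))|} = ∅ := by
      refine Set.eq_empty_of_forall_notMem fun z hz => hs.not_gt (hz.trans_le ?_)
      rw [zero_add, ← mul_div_assoc]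
      rcases eq_or_ne (z * β) 0 with h | h <;> simp [h]
    rw [hempty, measure_empty]
    exact zero_le
  rcases eq_or_ne β 0 with rfl | hβ
  · simp [(zero_lt_one.trans hs).not_gt]
  have hsub : {z : ℝ | s < |z * (β / (α + z * β))|} ⊆
      ((-β / α) * ·) ⁻¹' Set.Icc (s / (s + 1)) (s / (s - 1)) := by
    refine fun z hz => mem_Icc_of_lt_abs_div hs ?_
    have hw : z * (β / (α + z * β)) = -(-β / α * z / (1 - -β / α * z)) := by
      have hden : 1 - -β / α * z = (α + z * β) / α := by field_simp; ring
      rw [hden]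
      rcases eq_or_ne (α + z * β) 0 with h | h
      · simp [h]
      · field_simp
    rwa [Set.mem_ofPred_eq, hw, abs_neg] at hz
  refine (measure_mono hsub).trans
    ((hμ.measure_preimage_mul_Icc_le (by positivity)
      (div_ne_zero (neg_ne_zero.mpr hβ) hα)).trans_eq ?_)
  have : s - 1 ≠ 0 := by linarith
  congr 2
  field_simp
  ring

end LogDensityLE

end LogDensity

section Gaussian

theorem mul_exp_neg_sq_div_two_le_one (w : ℝ) : w * Real.exp (-(w ^ 2 / 2)) ≤ 1 := by
  rw [Real.exp_neg, ← div_eq_mul_inv, div_le_one (Real.exp_pos _)]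
  nlinarith [Real.add_one_le_exp (w ^ 2 / 2), sq_nonneg (w - 1)]

theorem abs_mul_gaussianPDFReal_le {m M : ℝ} (hm : |m| ≤ M) {v : NNReal} (hv : v ≠ 0) (z : ℝ) :
    |z| * gaussianPDFReal m v z ≤ (M + √v) / √(2 * Real.pi * v) := by
  have hs : 0 < √(v : ℝ) := Real.sqrt_pos.mpr (NNReal.coe_pos.mpr (pos_iff_ne_zero.mpr hv))
  set w := |z - m| / √v with hw
  have hexp : -(z - m) ^ 2 / (2 * v) = -(w ^ 2 / 2) := by
    rw [hw, div_pow, sq_abs, Real.sq_sqrt v.coe_nonneg]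
    ring
  have hz : |z| ≤ M + √v * w := by
    rw [hw, mul_div_cancel₀ _ hs.ne']
    linarith [abs_sub_abs_le_abs_sub z m]
  have hM : 0 ≤ M := (abs_nonneg m).trans hm
  rw [gaussianPDFReal, hexp, mul_left_comm, inv_mul_eq_div]
  gcongr
  calc |z| * Real.exp (-(w ^ 2 / 2))
      ≤ (M + √v * w) * Real.exp (-(w ^ 2 / 2)) := by gcongr
    _ = M * Real.exp (-(w ^ 2 / 2)) + √v * (w * Real.exp (-(w ^ 2 / 2))) := by ring
    _ ≤ M * 1 + √v * 1 := by
        gcongr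
        · exact Real.exp_le_one_iff.mpr (neg_nonpos.mpr (by positivity))
        · exact mul_exp_neg_sq_div_two_le_one w
    _ = M + √v := by ring

theorem logDensityLE_gaussianReal {m M : ℝ} (hm : |m| ≤ M) {v : NNReal} (hv : v ≠ 0) :
    LogDensityLE (gaussianReal m v) (ENNReal.ofReal ((M + √v) / √(2 * Real.pi * v))) := by
  rw [LogDensityLE, gaussianReal_of_var_ne_zero m hv]
  refine withDensity_mono ?_
  filter_upwards [Measure.ae_ne volume (0 : ℝ)] with z hz
  rw [ENNReal.le_div_iff_mul_le (by simp [hz]) (by simp), gaussianPDF, mul_comm,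
    Real.enorm_eq_ofReal_abs, ← ENNReal.ofReal_mul (abs_nonneg z)]
  exact ENNReal.ofReal_le_ofReal (abs_mul_gaussianPDFReal_le hm hv z)

theorem sqrt_two_div_pi : √(2 / Real.pi) = 2 / √(2 * Real.pi) := by
  rw [← Real.sqrt_sq (zero_le_two (α := ℝ)), ← Real.sqrt_div (by norm_num)]
  congr 1
  field_simp
  norm_num

theorem logDensityLE_gaussianReal_mk_sq {m M : ℝ} (hm : |m| ≤ M) {σ : ℝ} (hσ : 0 < σ) :
    LogDensityLE (gaussianReal m (NNReal.mk (σ ^ 2) (sq_nonneg σ)))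
      (ENNReal.ofReal ((M + σ) / σ * (√(2 / Real.pi) / 2))) := by
  have hvar : NNReal.mk (σ ^ 2) (sq_nonneg σ) ≠ 0 := NNReal.coe_ne_zero.mp (pow_ne_zero 2 hσ.ne')
  convert logDensityLE_gaussianReal hm hvar using 2
  rw [sqrt_two_div_pi, NNReal.coe_mk, Real.sqrt_mul' _ (sq_nonneg σ), Real.sqrt_sq hσ.le]
  field_simp

end Gaussian

section Product

open Function

variable {ι : Type*} [Fintype ι] [DecidableEq ι] {X : ι → Type*} [∀ i, MeasurableSpace (X i)]
  (μ : ∀ i, Measure (X i)) [∀ i, IsProbabilityMeasure (μ i)]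

theorem measurePreserving_update_pi (i : ι) :
    MeasurePreserving (fun p : (∀ j, X j) × X i => update p.1 i p.2)
      ((Measure.pi μ).prod (μ i)) (Measure.pi μ) := by
  refine ⟨measurable_update', (Measure.pi_eq fun s hs => ?_).symm⟩
  rw [Measure.map_apply measurable_update' (.univ_pi hs)]
  have hpre : (fun p : (∀ j, X j) × X i => update p.1 i p.2) ⁻¹' Set.univ.pi s =
      Set.univ.pi (update s i Set.univ) ×ˢ s i := by
    have hpi : Set.univ.pi (update s i Set.univ) = (Set.univ \ {i}).pi s := by
      simpa [Set.compl_eq_univ_sdiff] using Set.univ_pi_update i s Set.univ fun _ => id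
    ext p
    rw [Set.mem_preimage, Set.mem_prod, Set.update_mem_pi_iff, hpi]
    simp only [Set.mem_univ, true_imp_iff]
  simp_rw [hpre, Measure.prod_prod, Measure.pi_pi, apply_update fun j => μ j]
  rw [Finset.prod_update_of_mem (Finset.mem_univ i), measure_univ, one_mul, mul_comm]
  exact (Finset.prod_eq_mul_prod_sdiff_singleton_of_mem (Finset.mem_univ i)
    fun j => μ j (s j)).symm

theorem measure_pi_le_of_forall_update_le {E : Set (∀ j, X j)} (hE : MeasurableSet E) (i : ι)
    {B : ℝ≥0∞} (h : ∀ x, μ i {z | update x i z ∈ E} ≤ B) : Measure.pi μ E ≤ B := by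
  rw [← (measurePreserving_update_pi μ i).measure_preimage hE.nullMeasurableSet,
    Measure.prod_apply (measurable_update' hE)]
  exact (lintegral_mono h).trans_eq (by simp)

theorem ae_pi_of_ae_ae_update {p : (∀ j, X j) → Prop} (hp : MeasurableSet {x | p x}) (i : ι)
    (h : ∀ᵐ x ∂Measure.pi μ, ∀ᵐ z ∂μ i, p (update x i z)) : ∀ᵐ x ∂Measure.pi μ, p x := by
  rw [← (measurePreserving_update_pi μ i).map_eq, ae_map_iff measurable_update'.aemeasurable hp]
  exact (Measure.ae_prod_iff_ae_ae (measurable_update' hp)).mpr h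

end Product

section RandomPoint

open Function

variable {ι κ : Type*} [Fintype ι] [DecidableEq ι] {μ : ι → Measure ℝ}
  [∀ i, IsProbabilityMeasure (μ i)] {K : ℝ≥0∞} {f P Q : (ι → ℝ) → ℝ}

theorem IsCoordAffine.ae_piecewise_ne_zero [∀ i, NullSingletonClass (μ i)] (hf : IsCoordAffine f)
    {x₀ : ι → ℝ} (hx₀ : f x₀ ≠ 0) (T : Finset ι) :
    ∀ᵐ x ∂Measure.pi μ, f (T.piecewise x x₀) ≠ 0 := by
  induction T using Finset.induction_on with
  | empty => simp [hx₀]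
  | insert i T hi ih =>
    refine ae_pi_of_ae_ae_update μ ?_ i ?_
    · exact (hf.differentiable_piecewise _ x₀).continuous.measurable
        (measurableSet_singleton 0).compl
    filter_upwards [ih] with x hx
    have hz (z : ℝ) : (insert i T).piecewise (update x i z) x₀ =
        update (T.piecewise x x₀) i z := by
      have hT : T.piecewise (update x i z) x₀ = T.piecewise x x₀ :=
        T.piecewise_congr (fun j hj => update_of_ne (ne_of_mem_of_not_mem hj hi) z x) fun _ _ => rfl
      rw [Finset.piecewise_insert, update_self, hT]
    simp only [hz]
    exact measure_eq_zero_iff_ae_notMem.mp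
      ((hf.subsingleton_setOf_apply_update_eq_zero hx i).measure_zero (μ i))

theorem IsCoordAffine.ae_ne_zero [∀ i, NullSingletonClass (μ i)] (hf : IsCoordAffine f)
    {x₀ : ι → ℝ} (hx₀ : f x₀ ≠ 0) : ∀ᵐ x ∂Measure.pi μ, f x ≠ 0 := by
  simpa using hf.ae_piecewise_ne_zero hx₀ Finset.univ

theorem IsCoordAffine.measure_lt_abs_mul_logDeriv_le (hf : IsCoordAffine f) {i : ι}
    (hμ : LogDensityLE (μ i) K) {s : ℝ} (hs : 1 < s) :
    Measure.pi μ {x | s < |x i * logDeriv (fun y => f (update x i y)) (x i)|} ≤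
      K * ENNReal.ofReal (2 / (s - 1)) := by
  refine measure_pi_le_of_forall_update_le μ ?_ i fun x => ?_
  · simp only [hf.logDeriv_apply_update]
    have hm := hf.measurable
    refine measurableSet_lt measurable_const ?_
    refine continuous_abs.measurable.comp ((measurable_pi_apply i).mul (.div (.sub ?_ ?_) hm)) <;>
    exact hm.comp measurable_update_left
  · obtain ⟨α, β, h⟩ := hf x i
    have hlog (z : ℝ) : logDeriv (fun y => α + y * β) z = β / (α + z * β) := by
      simp [logDeriv_apply]
    simpa [h, hlog] using hμ.measure_lt_abs_div_le hs α β

theorem IsCoordAffine.measure_lt_relSensitivity_le (hf : IsCoordAffine f)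
    (hμ : ∀ i, LogDensityLE (μ i) K) {τ : ℝ} (hτ : Fintype.card ι < τ) :
    Measure.pi μ {x | τ < relSensitivity f x} ≤
      K * ENNReal.ofReal (2 * (Fintype.card ι : ℝ) ^ 2 / (τ - Fintype.card ι)) := by
  set N := Fintype.card ι with hN
  rcases isEmpty_or_nonempty ι with hι | hι
  · have hτ0 : 0 < τ := by simpa [hN] using hτ
    simp [relSensitivity, hτ0.not_gt]
  have hN0 : (0 : ℝ) < N := Nat.cast_pos.mpr Fintype.card_pos
  have hsub : {x | τ < relSensitivity f x} ⊆
      ⋃ i, {x | τ / N < |x i * logDeriv (fun y => f (update x i y)) (x i)|} := by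
    intro x hx
    by_contra! hle
    simp only [Set.mem_iUnion, Set.mem_ofPred_eq, not_exists, not_lt] at hle
    refine hx.not_ge ((Finset.sum_le_card_nsmul Finset.univ _ _ fun i _ => hle i).trans_eq ?_)
    rw [Finset.card_univ, nsmul_eq_mul, mul_div_cancel₀ _ hN0.ne']
  calc Measure.pi μ {x | τ < relSensitivity f x}
      ≤ ∑ i, Measure.pi μ {x | τ / N < |x i * logDeriv (fun y => f (update x i y)) (x i)|} :=
        (measure_mono hsub).trans (measure_iUnion_fintype_le _ _)
    _ ≤ ∑ _i : ι, K * ENNReal.ofReal (2 / (τ / N - 1)) :=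
        Finset.sum_le_sum fun i _ =>
          hf.measure_lt_abs_mul_logDeriv_le (hμ i) ((one_lt_div hN0).mpr hτ)
    _ = K * ENNReal.ofReal (2 * N ^ 2 / (τ - N)) := by
        have : τ - N ≠ 0 := by linarith
        rw [Finset.sum_const, Finset.card_univ, ← hN, nsmul_eq_mul, mul_left_comm,
          ← ENNReal.ofReal_natCast, ← ENNReal.ofReal_mul hN0.le]
        congr 2
        field_simp

theorem measure_lt_cwCond_div_le (D : Set (ι → ℝ)) (hP : IsCoordAffine P) (hQ : IsCoordAffine Q)
    {x₀ : ι → ℝ} (hx₀ : Q x₀ ≠ 0) (hμ : ∀ i, LogDensityLE (μ i) K) {t : ℝ}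
    (ht : 2 * Fintype.card ι < t) :
    Measure.pi μ {x | ENNReal.ofReal t < cwCond D (fun x (_ : κ) => P x / Q x) x} ≤
      K * ENNReal.ofReal (8 * (Fintype.card ι : ℝ) ^ 2 / (t - 2 * Fintype.card ι)) := by
  have hnull (i : ι) : NullSingletonClass (μ i) := (hμ i).nullSingletonClass
  by_cases hP0 : P = 0
  · simp [hP0, cwCond_const]
  obtain ⟨x₁, hx₁⟩ := ne_iff.mp hP0
  have hτ : Fintype.card ι < t / 2 := by linarith
  have hsub : {x | ENNReal.ofReal t < cwCond D (fun x (_ : κ) => P x / Q x) x} ≤ᵐ[Measure.pi μ]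
      ({x | t / 2 < relSensitivity P x} ∪ {x | t / 2 < relSensitivity Q x} : Set _) := by
    filter_upwards [hP.ae_ne_zero hx₁, hQ.ae_ne_zero hx₀] with x hPx hQx hx
    have hlt : t < relSensitivity P x + relSensitivity Q x :=
      lt_of_not_ge fun hge => hx.not_ge <|
        (cwCond_div_le D hP.differentiable.differentiableAt hQ.differentiable.differentiableAt
          hPx hQx).trans (ENNReal.ofReal_le_ofReal hge)
    rcases lt_or_ge (t / 2) (relSensitivity P x) with hPt | hPt
    · exact Or.inl hPt
    · exact Or.inr (show t / 2 < relSensitivity Q x by linarith)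
  refine (measure_mono_ae hsub).trans ((measure_union_le _ _).trans ?_)
  refine (add_le_add (hP.measure_lt_relSensitivity_le hμ hτ)
    (hQ.measure_lt_relSensitivity_le hμ hτ)).trans_eq ?_
  rw [← two_mul, mul_left_comm, ← ENNReal.ofReal_ofNat, ← ENNReal.ofReal_mul (by norm_num)]
  have : t - 2 * Fintype.card ι ≠ 0 := by linarith
  have : t / 2 - Fintype.card ι ≠ 0 := by linarith
  congr 2
  field_simp
  ring

end RandomPoint

section SparseMatrix

open Function

theorem exists_det_updateRow_update {R m : Type*} [CommRing R] [Fintype m] [DecidableEq m]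
    (M : Matrix m m R) (i j : m) (v : m → R) :
    ∃ α β : R, ∀ y, (M.updateRow i (update v j y)).det = α + y * β := by
  refine ⟨(M.updateRow i (update v j 0)).det, (M.updateRow i (Pi.single j 1)).det, fun y => ?_⟩
  have hrow : update v j y = update v j 0 + y • Pi.single j 1 := by
    ext l
    rcases eq_or_ne l j with rfl | hl <;> simp [*]
  rw [hrow, Matrix.det_updateRow_add, Matrix.det_updateRow_smul]

variable {n : ℕ} {S : Finset (Fin n × Fin n)}

/-- The matrix supported on `S` with prescribed entries there; this identifies `ℝ^S` with the space
`M_S` of the paper. -/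
def sparseMatrix (S : Finset (Fin n × Fin n)) (g : S → ℝ) : Matrix (Fin n) (Fin n) ℝ :=
  Matrix.of fun i j => if h : (i, j) ∈ S then g ⟨(i, j), h⟩ else 0

theorem matToFun_sparseMatrix (g : S → ℝ) :
    matToFun (sparseMatrix S g) = extend Subtype.val g 0 := by
  ext p
  by_cases hp : p ∈ S
  · simpa [matToFun, sparseMatrix, hp] using
      (Subtype.val_injective.extend_apply g (0 : Fin n × Fin n → ℝ) ⟨p, hp⟩).symm
  · rw [extend_apply' _ _ _ (by simpa using hp)]
    simp [matToFun, sparseMatrix, hp]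

theorem funToMat_extend_zero (g : S → ℝ) :
    funToMat (extend Subtype.val g 0) = sparseMatrix S g := by
  rw [← matToFun_sparseMatrix]
  rfl

theorem sparseMatrix_update (g : S → ℝ) (p : S) (y : ℝ) :
    sparseMatrix S (update g p y) =
      (sparseMatrix S g).updateRow p.1.1 (update (sparseMatrix S g p.1.1) p.1.2 y) := by
  obtain ⟨⟨a, b⟩, hp⟩ := p
  ext i j
  by_cases hi : i = a <;> by_cases hj : j = b <;>
    simp [sparseMatrix, Matrix.updateRow_apply, update_apply, *]

theorem isCoordAffine_det_sparseMatrix : IsCoordAffine fun g => (sparseMatrix S g).det := by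
  intro g p
  simp only [sparseMatrix_update]
  exact exists_det_updateRow_update _ _ _ _

theorem isCoordAffine_adjugate_sparseMatrix (k l : Fin n) :
    IsCoordAffine fun g => (sparseMatrix S g).adjugate k l := by
  intro g p
  simp only [sparseMatrix_update, Matrix.adjugate_apply]
  rcases eq_or_ne p.1.1 l with rfl | hl
  · exact ⟨_, 0, fun y => by rw [Matrix.updateRow_idem, mul_zero, add_zero]⟩
  · simp only [Matrix.updateRow_comm _ hl]
    exact exists_det_updateRow_update _ _ _ _

theorem Admissible.exists_det_sparseMatrix_ne_zero (hS : Admissible S) :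
    ∃ g, (sparseMatrix S g).det ≠ 0 := by
  obtain ⟨B, hB, hdet⟩ := hS
  refine ⟨fun p => B p.1.1 p.1.2, ?_⟩
  convert hdet.ne_zero
  ext i j
  by_cases h : (i, j) ∈ S <;> simp [sparseMatrix, h, hB]

theorem cInv_sparseMatrix_le (k l : Fin n) (g : S → ℝ) :
    cInv k l (sparseMatrix S g) ≤ cwCond {g | IsUnit (sparseMatrix S g).det}
      (fun g (_ : Unit) => (sparseMatrix S g).adjugate k l / (sparseMatrix S g).det) g := by
  have hinv (M : Matrix (Fin n) (Fin n) ℝ) : M⁻¹ k l = M.adjugate k l / M.det := by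
    rw [Matrix.inv_def, Matrix.smul_apply, smul_eq_mul, Ring.inverse_eq_inv', inv_mul_eq_div]
  rw [cInv, matToFun_sparseMatrix]
  simpa only [Set.mem_ofPred_eq, funToMat_extend_zero, hinv] using
    cwCond_extend_zero_le Subtype.val_injective {x | IsUnit (funToMat x).det}
      (fun x (_ : Unit) => (funToMat x)⁻¹ k l) g

theorem sparseGaussian_eq_map_sparseMatrix (Abar : Matrix (Fin n) (Fin n) ℝ) (σ : ℝ) :
    sparseGaussian S Abar σ =
      (Measure.pi fun p : S => gaussianReal (Abar p.1.1 p.1.2)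
        (NNReal.mk (σ ^ 2) (sq_nonneg σ))).map (sparseMatrix S) :=
  rfl

theorem measurable_sparseMatrix : Measurable (sparseMatrix S) := by
  refine measurable_pi_iff.mpr fun i => measurable_pi_iff.mpr fun j => ?_
  by_cases h : (i, j) ∈ S
  · simpa [sparseMatrix, h] using measurable_pi_apply (⟨(i, j), h⟩ : S)
  · simp [sparseMatrix, h]

theorem sparseMatrix_injective : Injective (sparseMatrix S) := by
  intro g g' h
  ext p
  simpa [sparseMatrix] using congrFun₂ h p.1.1 p.1.2

theorem measurableEmbedding_sparseMatrix : MeasurableEmbedding (sparseMatrix S) := by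
  have : MeasurableSpace.CountablySeparated (Matrix (Fin n) (Fin n) ℝ) :=
    inferInstanceAs (MeasurableSpace.CountablySeparated (Fin n → Fin n → ℝ))
  exact measurable_sparseMatrix.measurableEmbedding sparseMatrix_injective

end SparseMatrix

theorem prob_cInv_gt_general {n : ℕ} (S : Finset (Fin n × Fin n)) (hS : Admissible S)
    (μ : S → Measure ℝ) [∀ p, IsProbabilityMeasure (μ p)] {K : ℝ≥0∞}
    (hμ : ∀ p, LogDensityLE (μ p) K) (k l : Fin n) (t : ℝ) (ht : 2 * (S.card : ℝ) < t) :
    (Measure.pi μ).map (sparseMatrix S) {A | ENNReal.ofReal t < cInv k l A} ≤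
      K * ENNReal.ofReal (8 * (S.card : ℝ) ^ 2 / (t - 2 * S.card)) := by
  obtain ⟨g₀, hg₀⟩ := hS.exists_det_sparseMatrix_ne_zero
  rw [← Fintype.card_coe] at ht ⊢
  -- The event need not be measurable, but `sparseMatrix S` is a measurable embedding.
  rw [measurableEmbedding_sparseMatrix.map_apply]
  exact (measure_mono fun g hg => lt_of_lt_of_le hg (cInv_sparseMatrix_le k l g)).trans
    (measure_lt_cwCond_div_le _ (isCoordAffine_adjugate_sparseMatrix k l)
      isCoordAffine_det_sparseMatrix hg₀ hμ ht)

/-- Let `S ⊆ [n]²` be admissible, `Ā ∈ M_S` with `‖Ā‖_max ≤ 1`, `σ > 0`,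
`A ~ N_S(Ā, σ²Id)` and `k, l ∈ [n]`. For every real `t > 2|S|`,
`Prob{c†_{kl}(A) > t} ≤ ((1+σ)/σ)·(4|S|²/(t−2|S|))·√(2/π)`. -/
theorem prob_cInv_gt {n : ℕ} (S : Finset (Fin n × Fin n)) (hS : Admissible S)
    (Abar : Matrix (Fin n) (Fin n) ℝ) (hsupp : ∀ i j, (i, j) ∉ S → Abar i j = 0)
    (hmax : ∀ i j, |Abar i j| ≤ 1) (σ : ℝ) (hσ : 0 < σ)
    (k l : Fin n) (t : ℝ) (ht : 2 * (S.card : ℝ) < t) :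
    sparseGaussian S Abar σ {A | ENNReal.ofReal t < cInv k l A}
      ≤ ENNReal.ofReal ((1 + σ) / σ * (4 * (S.card : ℝ) ^ 2 / (t - 2 * S.card))
          * Real.sqrt (2 / Real.pi)) := by
  have hdens (p : S) := logDensityLE_gaussianReal_mk_sq (hmax p.1.1 p.1.2) hσ
  rw [sparseGaussian_eq_map_sparseMatrix]
  refine (prob_cInv_gt_general S hS _ hdens k l t ht).trans_eq ?_
  rw [← ENNReal.ofReal_mul (by positivity)]
  ring_nf
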